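/- arXiv:2001.04676 — 5 statements merged into one kernel-verified Lean document; each statement's English description precedes it below -/
import Mathlib

section
/- Suppose the assumptions in the context hold with positive constants α, β, γ, c1, c2, c3 satisfying α ≥ min(β, γ)/2. Then there exists a constant c4 > 0, depending only on α, β, γ, c1, c2, c3, such that for every accuracy ε with 0 < ε < exp(−1) there exist a maximum level L ∈ ℕ and positive integers N_0, …, N_L for which the mean squared error of the multilevel Monte Carlo estimator, namely (s_L − f_∞)² + Σ_{ℓ=0}^{L} Var[Δf_ℓ]/N_ℓ, is at most ε², while the total cost Σ_{ℓ=0}^{L} C_ℓ · N_ℓ is at most c4·ε^{−2} if β > γ, at most c4·ε^{−2}·(log ε^{−1})² if β = γ, and at most c4·ε^{−2−(γ−β)/α} if β < γ. -/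
open MeasureTheory ProbabilityTheory Finset


/-- The complexity bound without its constant. -/
noncomputable def mlmcB (α β γ ε : ℝ) : ℝ :=
  if γ < β then ε ^ (-2 : ℝ)
  else if β = γ then ε ^ (-2 : ℝ) * (Real.log ε⁻¹) ^ 2
  else ε ^ (-2 - (γ - β) / α)

lemma mlmc_q {a : ℝ} (ha : 0 < a) : 0 < 1 - (2 : ℝ) ^ (-a) := by
  have : (2 : ℝ) ^ (-a) < 1 := Real.rpow_lt_one_of_one_lt_of_neg (by norm_num) (by linarith)
  linarith

lemma mlmc_geo_pos {a : ℝ} (ha : 0 < a) (L : ℕ) :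
    ∑ l ∈ range (L + 1), (2 : ℝ) ^ (a * l) ≤ (2 : ℝ) ^ (a * L) / (1 - (2 : ℝ) ^ (-a)) := by
  have hq := mlmc_q ha
  have hq0 : 0 < (2 : ℝ) ^ (-a) := by positivity
  induction L with
  | zero =>
    simp only [zero_add, sum_range_one, Nat.cast_zero, mul_zero, Real.rpow_zero]
    rw [le_div_iff₀ hq]; linarith
  | succ n ih =>
    rw [sum_range_succ]
    have h : (2 : ℝ) ^ (a * n) = (2 : ℝ) ^ (-a) * (2 : ℝ) ^ (a * ((n + 1 : ℕ) : ℝ)) := by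
      rw [← Real.rpow_add (by norm_num)]; congr 1; push_cast; ring
    rw [h] at ih
    refine (add_le_add_left ih _).trans (le_of_eq ?_)
    field_simp
    ring

lemma mlmc_geo_neg {a : ℝ} (ha : 0 < a) (L : ℕ) :
    ∑ l ∈ range (L + 1), (2 : ℝ) ^ (-a * l) ≤ 1 / (1 - (2 : ℝ) ^ (-a)) := by
  have hq := mlmc_q ha
  have hq0 : 0 < (2 : ℝ) ^ (-a) := by positivity
  have h : ∀ l ∈ range (L + 1), (2 : ℝ) ^ (-a * l) = ((2 : ℝ) ^ (-a)) ^ l := by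
    intro l _
    rw [Real.rpow_mul (by norm_num), Real.rpow_natCast]
  rw [sum_congr rfl h, one_div, ← tsum_geometric_of_lt_one hq0.le (by linarith)]
  exact (summable_geometric_of_lt_one hq0.le (by linarith)).sum_le_tsum _
    (fun i _ => by positivity)

lemma mlmc_log {ε : ℝ} (h0 : 0 < ε) (h1 : ε < Real.exp (-1)) : 1 ≤ Real.log ε⁻¹ := by
  rw [Real.log_inv]
  have := (Real.log_lt_iff_lt_exp h0).2 h1
  linarith

lemma mlmc_lt_one {ε : ℝ} (h1 : ε < Real.exp (-1)) : ε ≤ 1 :=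
  h1.le.trans (Real.exp_le_one_iff.2 (by norm_num))

/-- Single-sample cost is dominated by the complexity bound. -/
lemma mlmc_B_ge {α β γ : ℝ} (hα : 0 < α) (hαβγ : min β γ / 2 ≤ α) {ε : ℝ}
    (h0 : 0 < ε) (h1 : ε < Real.exp (-1)) : ε ^ (-(γ / α)) ≤ mlmcB α β γ ε := by
  have he1 := mlmc_lt_one h1
  have hl := mlmc_log h0 h1
  unfold mlmcB
  split_ifs with h h'
  · rw [min_eq_right h.le] at hαβγ
    apply Real.rpow_le_rpow_of_exponent_ge h0 he1
    have : γ / α ≤ 2 := by rw [div_le_iff₀ hα]; linarith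
    linarith
  · rw [h', min_self] at hαβγ
    have h2 : ε ^ (-(γ / α)) ≤ ε ^ (-2 : ℝ) := by
      apply Real.rpow_le_rpow_of_exponent_ge h0 he1
      have : γ / α ≤ 2 := by rw [div_le_iff₀ hα]; linarith
      linarith
    refine h2.trans (le_mul_of_one_le_right (by positivity) ?_)
    nlinarith
  · rw [min_eq_left (not_lt.1 h)] at hαβγ
    apply Real.rpow_le_rpow_of_exponent_ge h0 he1
    have : β / α ≤ 2 := by rw [div_le_iff₀ hα]; linarith
    rw [sub_div]
    linarith

lemma mlmc_pow {α K ε : ℝ} (hα : 0 < α) (hK : 0 < K) (h0 : 0 < ε) {L : ℕ}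
    (hL : (2 : ℝ) ^ (α * L) ≤ K / ε) {g : ℝ} (hg : 0 < g) :
    (2 : ℝ) ^ (g * L) ≤ K ^ (g / α) * ε ^ (-(g / α)) := by
  have h : (2 : ℝ) ^ (g * L) = ((2 : ℝ) ^ (α * L)) ^ (g / α) := by
    rw [← Real.rpow_mul (by norm_num)]; congr 1; field_simp
  rw [h, Real.rpow_neg h0.le, ← div_eq_mul_inv, ← Real.div_rpow hK.le h0.le]
  exact Real.rpow_le_rpow (by positivity) hL (by positivity)

lemma mlmc_S {α β γ K : ℝ} (hα : 0 < α) (hK : 1 ≤ K) :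
    ∃ A > (0 : ℝ), ∀ ε : ℝ, 0 < ε → ε < Real.exp (-1) → ∀ L : ℕ,
      (2 : ℝ) ^ (α * L) ≤ K / ε →
      ε ^ (-2 : ℝ) * (∑ l ∈ range (L + 1), (2 : ℝ) ^ ((γ - β) / 2 * l)) ^ 2
        ≤ A * mlmcB α β γ ε := by
  have hK0 : 0 < K := by linarith
  unfold mlmcB
  split_ifs with h h'
  · have ha : 0 < (β - γ) / 2 := by linarith
    have hq := mlmc_q ha
    refine ⟨(1 / (1 - (2 : ℝ) ^ (-((β - γ) / 2)))) ^ 2, by positivity, ?_⟩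
    intro ε h0 h1 L hL
    have := mlmc_geo_neg ha L
    rw [show -((β - γ) / 2) = (γ - β) / 2 by ring] at *
    rw [mul_comm]
    gcongr
  · subst h'
    have hl2 : 0 < Real.log 2 := Real.log_pos (by norm_num)
    have hlK : 0 ≤ Real.log K := Real.log_nonneg hK
    refine ⟨((Real.log K + 1) / (α * Real.log 2) + 1) ^ 2, by positivity, ?_⟩
    intro ε h0 h1 L hL
    have hl := mlmc_log h0 h1
    have hs : ∑ l ∈ range (L + 1), (2 : ℝ) ^ ((β - β) / 2 * l) = L + 1 := by simp
    have h3 := Real.log_le_log (by positivity) hL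
    rw [Real.log_rpow (by norm_num), div_eq_mul_inv, Real.log_mul hK0.ne' (by positivity)] at h3
    have h4 : (L : ℝ) ≤ (Real.log K + 1) / (α * Real.log 2) * Real.log ε⁻¹ := by
      rw [div_mul_eq_mul_div, le_div_iff₀ (by positivity)]
      nlinarith
    have h5 : (L : ℝ) + 1 ≤ ((Real.log K + 1) / (α * Real.log 2) + 1) * Real.log ε⁻¹ := by
      linarith
    rw [hs]
    calc ε ^ (-2 : ℝ) * ((L : ℝ) + 1) ^ 2
        ≤ ε ^ (-2 : ℝ) * (((Real.log K + 1) / (α * Real.log 2) + 1) * Real.log ε⁻¹) ^ 2 := by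
          gcongr
      _ = _ := by ring
  · have hlt : β < γ := lt_of_le_of_ne (not_lt.1 h) h'
    have ha : 0 < (γ - β) / 2 := by linarith
    have hq := mlmc_q ha
    refine ⟨(K ^ ((γ - β) / 2 / α) / (1 - (2 : ℝ) ^ (-((γ - β) / 2)))) ^ 2, by positivity, ?_⟩
    intro ε h0 h1 L hL
    have h3 := mlmc_geo_pos ha L
    have h4 := mlmc_pow hα hK0 h0 hL ha
    have h5 := h3.trans (div_le_div_of_nonneg_right h4 hq.le)
    have h6 : ε ^ (-2 - (γ - β) / α) = ε ^ (-2 : ℝ) * (ε ^ (-((γ - β) / 2 / α))) ^ 2 := by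
      rw [← Real.rpow_natCast, ← Real.rpow_mul h0.le, ← Real.rpow_add h0]
      congr 1; push_cast; field_simp; ring
    rw [h6]
    calc _ ≤ ε ^ (-2 : ℝ) * (K ^ ((γ - β) / 2 / α) * ε ^ (-((γ - β) / 2 / α)) /
            (1 - (2 : ℝ) ^ (-((γ - β) / 2)))) ^ 2 := by
          gcongr
      _ = _ := by ring

lemma mlmc_level {α c1 : ℝ} (hα : 0 < α) (hc1 : 0 < c1) :
    ∃ K ≥ (1 : ℝ), ∀ ε : ℝ, 0 < ε → ε ≤ 1 → ∃ L : ℕ,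
      c1 * (2 : ℝ) ^ (-α * L) ≤ ε / 2 ∧ (2 : ℝ) ^ (α * L) ≤ K / ε := by
  have hM : 1 ≤ max (2 * c1) 1 := le_max_right _ _
  have hM' : 2 * c1 ≤ max (2 * c1) 1 := le_max_left _ _
  set M := max (2 * c1) 1
  have h2a : 1 ≤ (2 : ℝ) ^ α := Real.one_le_rpow (by norm_num) hα.le
  refine ⟨2 ^ α * M, by nlinarith, ?_⟩
  intro ε h0 h1
  have hMe : 1 ≤ M / ε := by rw [le_div_iff₀ h0]; linarith
  have hlog : 0 ≤ Real.logb 2 (M / ε) := Real.logb_nonneg (by norm_num) hMe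
  have hx : (2 : ℝ) ^ Real.logb 2 (M / ε) = M / ε :=
    Real.rpow_logb (by norm_num) (by norm_num) (by linarith)
  refine ⟨⌈Real.logb 2 (M / ε) / α⌉₊, ?_, ?_⟩
  · have h := Nat.le_ceil (Real.logb 2 (M / ε) / α)
    rw [div_le_iff₀ hα] at h
    set L := ⌈Real.logb 2 (M / ε) / α⌉₊
    have h3 : M / ε ≤ (2 : ℝ) ^ (α * L) := by
      rw [← hx]
      exact Real.rpow_le_rpow_of_exponent_le (by norm_num) (by linarith)
    rw [neg_mul, Real.rpow_neg (by norm_num), ← div_eq_mul_inv, div_le_iff₀ (by positivity)]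
    rw [div_le_iff₀ h0] at h3
    linarith
  · have h := (Nat.ceil_lt_add_one (div_nonneg hlog hα.le)).le
    set L := ⌈Real.logb 2 (M / ε) / α⌉₊
    have h3 : α * L ≤ α + Real.logb 2 (M / ε) := by
      calc α * L ≤ α * (Real.logb 2 (M / ε) / α + 1) := by gcongr
        _ = _ := by field_simp; ring
    calc (2 : ℝ) ^ (α * L) ≤ 2 ^ (α + Real.logb 2 (M / ε)) :=
          Real.rpow_le_rpow_of_exponent_le (by norm_num) h3
      _ = _ := by rw [Real.rpow_add (by norm_num), hx]; ring

lemma mlmc_real (α β γ c1 c2 c3 : ℝ) (hα : 0 < α) (hγ : 0 < γ)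
    (hc1 : 0 < c1) (hc2 : 0 < c2) (hc3 : 0 < c3) (hαβγ : min β γ / 2 ≤ α) :
    ∃ c4 > (0 : ℝ), ∀ ε : ℝ, 0 < ε → ε < Real.exp (-1) →
      ∃ (L : ℕ) (N : ℕ → ℕ), (∀ l, 0 < N l) ∧ c1 * (2 : ℝ) ^ (-α * L) ≤ ε / 2 ∧
        ∑ l ∈ range (L + 1), c2 * (2 : ℝ) ^ (-β * l) / (N l : ℝ) ≤ ε ^ 2 / 2 ∧
        ∑ l ∈ range (L + 1), c3 * (2 : ℝ) ^ (γ * l) * (N l : ℝ) ≤ c4 * mlmcB α β γ ε := by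
  obtain ⟨K, hK, hlev⟩ := mlmc_level hα hc1
  obtain ⟨A, hA, hS⟩ := mlmc_S (α := α) (β := β) (γ := γ) hα hK
  have hq := mlmc_q hγ
  have hK0 : 0 < K := by linarith
  refine ⟨c3 * (K ^ (γ / α) / (1 - (2 : ℝ) ^ (-γ))) + 2 * c2 * c3 * A, by positivity, ?_⟩
  intro ε h0 h1
  obtain ⟨L, hL1, hL2⟩ := hlev ε h0 (mlmc_lt_one h1)
  have hSb := hS ε h0 h1 L hL2
  have hBge := mlmc_B_ge (β := β) hα hαβγ h0 h1
  have hSpos : 0 < ∑ l ∈ range (L + 1), (2 : ℝ) ^ ((γ - β) / 2 * l) :=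
    sum_pos (fun _ _ => by positivity) ⟨0, by simp⟩
  set S := ∑ l ∈ range (L + 1), (2 : ℝ) ^ ((γ - β) / 2 * l) with hSdef
  have hx : ∀ l : ℕ, 0 < 2 * ε ^ (-2 : ℝ) * c2 * S * (2 : ℝ) ^ (-((β + γ) / 2) * l) :=
    fun l => by positivity
  have he : ε ^ (-2 : ℝ) = (ε ^ 2)⁻¹ := by
    rw [Real.rpow_neg h0.le]; norm_num
  refine ⟨L, fun l => ⌈2 * ε ^ (-2 : ℝ) * c2 * S * (2 : ℝ) ^ (-((β + γ) / 2) * l)⌉₊,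
    fun l => Nat.ceil_pos.2 (hx l), hL1, ?_, ?_⟩
  · calc _ ≤ ∑ l ∈ range (L + 1), ε ^ 2 / 2 / S * (2 : ℝ) ^ ((γ - β) / 2 * l) := by
          apply sum_le_sum
          intro l _
          refine (div_le_div_of_nonneg_left (by positivity) (hx l) (Nat.le_ceil _)).trans
            (le_of_eq ?_)
          have h3 : (2 : ℝ) ^ (-β * l)
              = (2 : ℝ) ^ ((γ - β) / 2 * l) * (2 : ℝ) ^ (-((β + γ) / 2) * l) := by
            rw [← Real.rpow_add (by norm_num)]; congr 1; ring
          have h4 : (2 : ℝ) ^ (-((β + γ) / 2) * l) ≠ 0 := by positivity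
          rw [h3, he]
          generalize (2 : ℝ) ^ (-((β + γ) / 2) * l) = y at *
          generalize (2 : ℝ) ^ ((γ - β) / 2 * l) = z at *
          field_simp
      _ = ε ^ 2 / 2 := by
          rw [← mul_sum, ← hSdef]; field_simp
      _ ≤ _ := le_rfl
  · have h5 := mlmc_geo_pos hγ L
    have h6 := h5.trans (div_le_div_of_nonneg_right (mlmc_pow hα hK0 h0 hL2 hγ) hq.le)
    calc _ ≤ ∑ l ∈ range (L + 1), (c3 * (2 : ℝ) ^ (γ * l)
            + 2 * c2 * c3 * ε ^ (-2 : ℝ) * S * (2 : ℝ) ^ ((γ - β) / 2 * l)) := by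
          apply sum_le_sum
          intro l _
          have h7 := (Nat.ceil_lt_add_one (hx l).le).le
          have h3 : (2 : ℝ) ^ ((γ - β) / 2 * l)
              = (2 : ℝ) ^ (γ * l) * (2 : ℝ) ^ (-((β + γ) / 2) * l) := by
            rw [← Real.rpow_add (by norm_num)]; congr 1; ring
          refine (mul_le_mul_of_nonneg_left h7 (by positivity)).trans (le_of_eq ?_)
          rw [h3]; ring
      _ = c3 * (∑ l ∈ range (L + 1), (2 : ℝ) ^ (γ * l))
            + 2 * c2 * c3 * (ε ^ (-2 : ℝ) * S ^ 2) := by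
          rw [sum_add_distrib, ← mul_sum, ← mul_sum, ← hSdef]; ring
      _ ≤ c3 * (K ^ (γ / α) * mlmcB α β γ ε / (1 - (2 : ℝ) ^ (-γ)))
            + 2 * c2 * c3 * (A * mlmcB α β γ ε) := by
          have h8 : K ^ (γ / α) * ε ^ (-(γ / α)) / (1 - (2 : ℝ) ^ (-γ))
              ≤ K ^ (γ / α) * mlmcB α β γ ε / (1 - (2 : ℝ) ^ (-γ)) := by gcongr
          have h9 := h6.trans h8
          gcongr
      _ = _ := by ring

/-- **The multilevel Monte Carlo complexity theorem** (Giles; Cliffe–Giles–Scheichl–Teckentrup).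
Let `Δf ℓ` be square-integrable level-`ℓ` corrections on a probability space `(Ω, P)` with
deterministic costs `C ℓ > 0`, and let `flim` be the target value.  Write
`s L = ∑_{ℓ=0}^L E[Δf ℓ]`.  Assume, for positive constants `α, β, γ, c1, c2, c3` with
`α ≥ min(β,γ)/2`, the bias bound `|s ℓ − flim| ≤ c1·2^{−αℓ}`, the variance bound
`Var[Δf ℓ] ≤ c2·2^{−βℓ}` and the cost bound `C ℓ ≤ c3·2^{γℓ}`.  Then there is a constant
`c4 > 0` (depending only on `α, β, γ, c1, c2, c3`) such that for every `0 < ε < exp (−1)`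
there are a maximum level `L` and positive sample sizes `N 0, …, N L` for which the MLMC
mean squared error `(s L − flim)² + ∑_{ℓ≤L} Var[Δf ℓ]/N ℓ` is at most `ε²` while the total
cost `∑_{ℓ≤L} C ℓ · N ℓ` obeys the `β > γ` / `β = γ` / `β < γ` complexity bounds. -/
theorem mlmc_complexity
    (α β γ c1 c2 c3 : ℝ) (hα : 0 < α) (hβ : 0 < β) (hγ : 0 < γ)
    (hc1 : 0 < c1) (hc2 : 0 < c2) (hc3 : 0 < c3) (hαβγ : min β γ / 2 ≤ α) :
    ∃ c4 > (0 : ℝ),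
      ∀ {Ω : Type} [MeasurableSpace Ω] (P : Measure Ω), IsProbabilityMeasure P →
      ∀ (Δf : ℕ → Ω → ℝ), (∀ ℓ, MemLp (Δf ℓ) 2 P) →
      ∀ (C : ℕ → ℝ), (∀ ℓ, 0 < C ℓ) →
      ∀ flim : ℝ,
      (∀ ℓ : ℕ, |(∑ j ∈ range (ℓ + 1), ∫ ω, Δf j ω ∂P) - flim| ≤ c1 * (2 : ℝ) ^ (-α * ℓ)) →
      (∀ ℓ : ℕ, variance (Δf ℓ) P ≤ c2 * (2 : ℝ) ^ (-β * ℓ)) →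
      (∀ ℓ : ℕ, C ℓ ≤ c3 * (2 : ℝ) ^ (γ * ℓ)) →
      ∀ ε : ℝ, 0 < ε → ε < Real.exp (-1) →
        ∃ (L : ℕ) (N : ℕ → ℕ),
          (∀ ℓ ≤ L, 0 < N ℓ) ∧
          ((∑ j ∈ range (L + 1), ∫ ω, Δf j ω ∂P) - flim) ^ 2
              + ∑ ℓ ∈ range (L + 1), variance (Δf ℓ) P / (N ℓ : ℝ) ≤ ε ^ 2 ∧
          ∑ ℓ ∈ range (L + 1), C ℓ * (N ℓ : ℝ) ≤
            (if γ < β then c4 * ε ^ (-2 : ℝ)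
             else if β = γ then c4 * ε ^ (-2 : ℝ) * (Real.log ε⁻¹) ^ 2
             else c4 * ε ^ (-2 - (γ - β) / α)) := by
  obtain ⟨c4, hc4, H⟩ := mlmc_real α β γ c1 c2 c3 hα hγ hc1 hc2 hc3 hαβγ
  refine ⟨c4, hc4, ?_⟩
  intro Ω _ P _ Δf _ C _ flim hbias hvar hcost ε h0 h1
  obtain ⟨L, N, hN, hb, hv, hc⟩ := H ε h0 h1
  refine ⟨L, N, fun l _ => hN l, ?_, ?_⟩
  · have hb1 := (hbias L).trans hb
    have hb2 := sq_le_sq' (abs_le.1 hb1).1 (abs_le.1 hb1).2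
    have hv1 : ∑ ℓ ∈ range (L + 1), variance (Δf ℓ) P / (N ℓ : ℝ) ≤ ε ^ 2 / 2 :=
      (sum_le_sum fun l _ => div_le_div_of_nonneg_right (hvar l) (Nat.cast_nonneg _)).trans hv
    nlinarith [sq_nonneg ε]
  · have hc' := (sum_le_sum fun l (_ : l ∈ range (L + 1)) =>
      mul_le_mul_of_nonneg_right (hcost l) (Nat.cast_nonneg (N l))).trans hc
    refine hc'.trans (le_of_eq ?_)
    unfold mlmcB
    split_ifs <;> ring
end

section
/- Let W_1, W_2, … be i.i.d. positive random variables with mean μ = E[W_1] ∈ (0, ∞), and suppose there exists δ ∈ (0, 1) such that |W_1 − μ| ≤ δ·μ almost surely. Write Ȳ_k = (1/k) Σ_{i=1}^{k} W_i. Then there exists a constant C > 0 such that for all k ≥ 2, |E[log Ȳ_k] − E[log Ȳ_{k−1}]| ≤ C·k^{−2}; consequently there exists C' > 0 such that for all K ≥ 1, 0 ≤ log μ − E[log Ȳ_K] ≤ C'/K. -/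
open MeasureTheory ProbabilityTheory Finset

/-- Two-sided first order bounds for the logarithm on `[m, ∞)`. -/
lemma log_increment_bounds {m x y : ℝ} (hm : 0 < m) (hx : m ≤ x) (hy : m ≤ y) :
    (y - x) / x - (y - x) ^ 2 / m ^ 2 ≤ Real.log y - Real.log x ∧
      Real.log y - Real.log x ≤ (y - x) / x := by
  have hx0 : 0 < x := hm.trans_le hx
  have hy0 : 0 < y := hm.trans_le hy
  rw [← Real.log_div hy0.ne' hx0.ne']
  constructor
  · have h1 := Real.one_sub_inv_le_log_of_pos (div_pos hy0 hx0)
    have h2 : (y - x) ^ 2 / (x * y) ≤ (y - x) ^ 2 / m ^ 2 := by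
      apply div_le_div_of_nonneg_left (sq_nonneg _) (by positivity)
      nlinarith
    have h3 : 1 - (y / x)⁻¹ = (y - x) / x - (y - x) ^ 2 / (x * y) := by
      field_simp
      ring
    linarith
  · have h1 := Real.log_le_sub_one_of_pos (div_pos hy0 hx0)
    have h3 : y / x - 1 = (y - x) / x := by
      field_simp
    linarith

/-- Two-sided bounds for the relative inverse on `[m, ∞)`. -/
lemma inv_increment_bounds {m a μ : ℝ} (hm : 0 < m) (ha : m ≤ a) (hμ : m ≤ μ) :
    -((a - μ) / μ) ≤ μ * a⁻¹ - 1 ∧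
      μ * a⁻¹ - 1 ≤ -((a - μ) / μ) + (a - μ) ^ 2 / m ^ 2 := by
  have ha0 : 0 < a := hm.trans_le ha
  have hμ0 : 0 < μ := hm.trans_le hμ
  have h3 : μ * a⁻¹ - 1 = -((a - μ) / μ) + (a - μ) ^ 2 / (a * μ) := by
    field_simp
    ring
  have h2 : (a - μ) ^ 2 / (a * μ) ≤ (a - μ) ^ 2 / m ^ 2 := by
    apply div_le_div_of_nonneg_left (sq_nonneg _) (by positivity)
    nlinarith
  have h4 : 0 ≤ (a - μ) ^ 2 / (a * μ) := by positivity
  constructor <;> linarith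

/-- **Decay of SUMO/MLMC increments for bounded weights.**
Let `W 1, W 2, …` be i.i.d. positive importance weights with mean `μ ∈ (0,∞)` satisfying
`|W − μ| ≤ δ·μ` almost surely for some `δ ∈ (0,1)`, and let `Ȳ k` be the sample mean of
the first `k` weights.  Then the expected increments of the level-`k` estimators
`log Ȳ k` decay like `k⁻²`; consequently the bias of the level-`K` estimator satisfies
`0 ≤ log μ − E[log Ȳ K] ≤ C'/K`. -/
theorem log_sample_mean_increment_decay
    {Ω : Type*} [MeasurableSpace Ω] (P : Measure Ω) [IsProbabilityMeasure P]
    (W : ℕ → Ω → ℝ) (hmeas : ∀ i, Measurable (W i))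
    (hindep : iIndepFun W P)
    (hident : ∀ i, IdentDistrib (W i) (W 0) P P)
    (hpos : ∀ i, ∀ᵐ ω ∂P, 0 < W i ω)
    (hint : Integrable (W 0) P)
    (μ : ℝ) (hμ : μ = ∫ ω, W 0 ω ∂P) (hμ_pos : 0 < μ)
    (δ : ℝ) (hδ0 : 0 < δ) (hδ1 : δ < 1)
    (hbdd : ∀ i, ∀ᵐ ω ∂P, |W i ω - μ| ≤ δ * μ) :
    (∃ C > (0 : ℝ), ∀ k : ℕ, 2 ≤ k →
      |(∫ ω, Real.log ((∑ i ∈ range k, W i ω) / k) ∂P)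
          - ∫ ω, Real.log ((∑ i ∈ range (k - 1), W i ω) / (k - 1 : ℕ)) ∂P|
        ≤ C * ((k : ℝ) ^ 2)⁻¹) ∧
    (∃ C' > (0 : ℝ), ∀ K : ℕ, 1 ≤ K →
      0 ≤ Real.log μ - ∫ ω, Real.log ((∑ i ∈ range K, W i ω) / K) ∂P ∧
      Real.log μ - ∫ ω, Real.log ((∑ i ∈ range K, W i ω) / K) ∂P ≤ C' / K) := by
  -- the sample means and the lower bound
  obtain ⟨A, hA⟩ : ∃ A : ℕ → Ω → ℝ, A = fun n ω => (∑ i ∈ range n, W i ω) / n := ⟨_, rfl⟩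
  obtain ⟨m, hm⟩ : ∃ m : ℝ, m = (1 - δ) * μ := ⟨_, rfl⟩
  have hm0 : 0 < m := by rw [hm]; exact mul_pos (by linarith) hμ_pos
  have hmμ : m ≤ μ := by rw [hm]; nlinarith
  have hδμ : δ * μ ≤ μ := by nlinarith
  have hAm : ∀ n, Measurable (A n) := by
    intro n
    rw [hA]
    exact (Finset.measurable_sum _ fun i _ => hmeas i).div_const _
  have hWb : ∀ᵐ ω ∂P, ∀ i, W i ω ∈ Set.Icc m (2 * μ) := by
    rw [ae_all_iff]
    intro i
    filter_upwards [hbdd i] with ω h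
    rw [abs_le] at h
    constructor
    · rw [hm]; linarith
    · linarith
  have hAb : ∀ n, 1 ≤ n → ∀ᵐ ω ∂P, A n ω ∈ Set.Icc m (2 * μ) := by
    intro n hn
    have hn0 : (0 : ℝ) < n := by exact_mod_cast hn
    filter_upwards [hWb] with ω h
    have h1 : ∑ i ∈ range n, m ≤ ∑ i ∈ range n, W i ω := Finset.sum_le_sum fun i _ => (h i).1
    have h2 : ∑ i ∈ range n, W i ω ≤ ∑ i ∈ range n, 2 * μ :=
      Finset.sum_le_sum fun i _ => (h i).2
    rw [Finset.sum_const, card_range, nsmul_eq_mul] at h1 h2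
    rw [hA]
    constructor
    · rw [le_div_iff₀ hn0]; linarith
    · rw [div_le_iff₀ hn0]; linarith
  have hWL : ∀ i, MemLp (W i) 2 P := fun i =>
    memLp_of_bounded (hWb.mono fun ω h => h i) (hmeas i).aestronglyMeasurable 2
  have hWi : ∀ i, Integrable (W i) P := fun i => (hWL i).integrable (by norm_num)
  have hWE : ∀ i, ∫ ω, W i ω ∂P = μ := fun i => by rw [hμ]; exact (hident i).integral_eq
  have hAL : ∀ n, 1 ≤ n → MemLp (A n) 2 P := fun n hn =>
    memLp_of_bounded (hAb n hn) (hAm n).aestronglyMeasurable 2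
  have hAi : ∀ n, 1 ≤ n → Integrable (A n) P := fun n hn =>
    (hAL n hn).integrable (by norm_num)
  have hAE : ∀ n, 1 ≤ n → ∫ ω, A n ω ∂P = μ := by
    intro n hn
    have hn0 : (0 : ℝ) < n := by exact_mod_cast hn
    rw [hA]
    simp only
    rw [integral_div, integral_finsetSum _ fun i _ => hWi i]
    simp only [hWE, Finset.sum_const, card_range, nsmul_eq_mul]
    field_simp
  have hAV : ∀ n, 1 ≤ n → ∫ ω, (A n ω - μ) ^ 2 ∂P ≤ μ ^ 2 / n := by
    intro n hn
    have hn0 : (0 : ℝ) < n := by exact_mod_cast hn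
    have h1 := variance_eq_integral (μ := P) (hAm n).aemeasurable
    rw [hAE n hn] at h1
    rw [← h1]
    have h2 : A n = fun ω => ((n : ℝ)⁻¹) * (∑ i ∈ range n, W i) ω := by
      rw [hA]; funext ω; simp only [Finset.sum_apply]; rw [div_eq_inv_mul]
    rw [h2, variance_const_mul, IndepFun.variance_sum (fun i _ => hWL i)
      (fun i _ j _ hij => hindep.indepFun hij)]
    have h3 : ∑ i ∈ range n, variance (W i) P ≤ ∑ i ∈ range n, μ ^ 2 := by
      refine Finset.sum_le_sum fun i _ => ?_
      have h4 := variance_le_sq_of_bounded (hWb.mono fun ω h => h i) (hmeas i).aemeasurable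
      refine h4.trans ?_
      apply pow_le_pow_left₀ <;> linarith
    rw [Finset.sum_const, card_range, nsmul_eq_mul] at h3
    calc ((n : ℝ)⁻¹) ^ 2 * ∑ i ∈ range n, variance (W i) P
        ≤ ((n : ℝ)⁻¹) ^ 2 * (n * μ ^ 2) := by gcongr
      _ = μ ^ 2 / n := by field_simp
  have hAS : ∀ n, 1 ≤ n → Integrable (fun ω => (A n ω - μ) ^ 2) P := fun n hn =>
    ((hAL n hn).sub (memLp_const μ)).integrable_sq
  have hlog : ∀ n, 1 ≤ n → Integrable (fun ω => Real.log (A n ω)) P := by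
    intro n hn
    refine (memLp_of_bounded (a := Real.log m) (b := Real.log (2 * μ)) ?_
      (Real.measurable_log.comp (hAm n)).aestronglyMeasurable 1).integrable le_rfl
    filter_upwards [hAb n hn] with ω h
    exact ⟨Real.log_le_log hm0 h.1, Real.log_le_log (hm0.trans_le h.1) h.2⟩
  have hlin : ∀ n, 1 ≤ n → Integrable (fun ω => (A n ω - μ) / μ) P := fun n hn =>
    ((hAi n hn).sub (integrable_const μ)).div_const μ
  have hlinE : ∀ n, 1 ≤ n → ∫ ω, (A n ω - μ) / μ ∂P = 0 := by
    intro n hn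
    rw [integral_div, integral_sub (hAi n hn) (integrable_const μ), hAE n hn]
    simp
  constructor
  · refine ⟨4 * μ ^ 2 / m ^ 2, by positivity, ?_⟩
    intro k hk
    obtain ⟨n, rfl⟩ : ∃ n, k = n + 1 := ⟨k - 1, by omega⟩
    have hn : 1 ≤ n := by omega
    rw [Nat.add_sub_cancel]
    have hn1 : (1 : ℝ) ≤ n := by exact_mod_cast hn
    have hn0 : (0 : ℝ) < n := by linarith
    have e1 : ∀ j, (∫ ω, Real.log ((∑ i ∈ range j, W i ω) / j) ∂P)
        = ∫ ω, Real.log (A j ω) ∂P := by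
      intro j; rw [hA]
    rw [e1, e1, ← integral_sub (hlog _ (by omega)) (hlog _ hn)]
    -- the inverse of the mean
    have hinvm : Measurable fun ω => (A n ω)⁻¹ := (hAm n).inv
    have hinvL : MemLp (fun ω => (A n ω)⁻¹) 2 P := by
      refine memLp_of_bounded (a := 0) (b := m⁻¹) ?_ hinvm.aestronglyMeasurable 2
      filter_upwards [hAb n hn] with ω h
      exact ⟨inv_nonneg.2 (hm0.le.trans h.1), inv_anti₀ hm0 h.1⟩
    have hinvi : Integrable (fun ω => (A n ω)⁻¹) P := hinvL.integrable (by norm_num)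
    have hind : IndepFun (fun ω => (A n ω)⁻¹) (W n) P := by
      have h := hindep.indepFun_sum_range_succ hmeas n
      have h2 := h.comp (φ := fun x : ℝ => (x / n)⁻¹) (ψ := id)
        (measurable_id.div_const _).inv measurable_id
      have h3 : (fun ω => (A n ω)⁻¹) = (fun x : ℝ => (x / n)⁻¹) ∘ (∑ j ∈ range n, W j) := by
        funext ω; simp [hA]
      rw [h3]; exact h2
    have hprodi : Integrable (fun ω => (A n ω)⁻¹ * W n ω) P := hind.integrable_mul hinvi (hWi n)
    have hprodE : ∫ ω, (A n ω)⁻¹ * W n ω ∂P = (∫ ω, (A n ω)⁻¹ ∂P) * μ := by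
      rw [hind.integral_fun_mul_eq_mul_integral hinvm.aestronglyMeasurable
        (hmeas n).aestronglyMeasurable, hWE]
    obtain ⟨e, he⟩ : ∃ e : ℝ, e = ∫ ω, ((A n ω)⁻¹ * W n ω - 1) ∂P := ⟨_, rfl⟩
    have he2 : e = ∫ ω, (μ * (A n ω)⁻¹ - 1) ∂P := by
      rw [he, integral_sub hprodi (integrable_const _),
        integral_sub (hinvi.const_mul μ) (integrable_const _), hprodE, integral_const_mul, mul_comm]
    have hei : Integrable (fun ω => μ * (A n ω)⁻¹ - 1) P :=
      (hinvi.const_mul μ).sub (integrable_const _)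
    have he0 : 0 ≤ e := by
      have : ∫ ω, -((A n ω - μ) / μ) ∂P ≤ e := by
        rw [he2]
        refine integral_mono_ae (hlin n hn).neg hei ?_
        filter_upwards [hAb n hn] with ω h
        exact (inv_increment_bounds hm0 h.1 hmμ).1
      rw [integral_neg, hlinE n hn] at this
      linarith
    have heU : e ≤ μ ^ 2 / n / m ^ 2 := by
      have : e ≤ ∫ ω, (-((A n ω - μ) / μ) + (A n ω - μ) ^ 2 / m ^ 2) ∂P := by
        rw [he2]
        refine integral_mono_ae hei ((hlin n hn).neg.add ((hAS n hn).div_const _)) ?_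
        filter_upwards [hAb n hn] with ω h
        exact (inv_increment_bounds hm0 h.1 hmμ).2
      have hneg : Integrable (fun ω => -((A n ω - μ) / μ)) P := (hlin n hn).neg
      rw [integral_add hneg ((hAS n hn).div_const _), integral_neg, hlinE n hn,
        integral_div] at this
      have h2 : (∫ ω, (A n ω - μ) ^ 2 ∂P) / m ^ 2 ≤ μ ^ 2 / n / m ^ 2 := by
        gcongr
        exact hAV n hn
      linarith
    -- pointwise bounds on the increments
    have hpt : ∀ᵐ ω ∂P,
        ((A n ω)⁻¹ * W n ω - 1) / (n + 1 : ℝ) - 4 * μ ^ 2 / m ^ 2 * ((n + 1 : ℝ) ^ 2)⁻¹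
          ≤ Real.log (A (n + 1) ω) - Real.log (A n ω) ∧
        Real.log (A (n + 1) ω) - Real.log (A n ω) ≤ ((A n ω)⁻¹ * W n ω - 1) / (n + 1 : ℝ) := by
      filter_upwards [hWb, hAb n hn, hAb (n + 1) (by omega)] with ω h1 h2 h3
      have hd : A (n + 1) ω - A n ω = (W n ω - A n ω) / (n + 1 : ℝ) := by
        rw [hA]
        simp only [Finset.sum_range_succ]
        push_cast
        field_simp
        ring
      have hA0 : 0 < A n ω := hm0.trans_le h2.1
      have hb := log_increment_bounds hm0 h2.1 h3.1
      rw [hd] at hb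
      have e3 : (W n ω - A n ω) / (n + 1 : ℝ) / A n ω
          = ((A n ω)⁻¹ * W n ω - 1) / (n + 1 : ℝ) := by
        field_simp
      rw [e3] at hb
      refine ⟨?_, hb.2⟩
      have e4 : ((W n ω - A n ω) / (n + 1 : ℝ)) ^ 2 / m ^ 2
          ≤ 4 * μ ^ 2 / m ^ 2 * ((n + 1 : ℝ) ^ 2)⁻¹ := by
        have e5 : (W n ω - A n ω) ^ 2 ≤ 4 * μ ^ 2 := by
          have := (h1 n).1
          have := (h1 n).2
          have := h2.1
          have := h2.2
          have : |W n ω - A n ω| ≤ 2 * μ := by rw [abs_le]; constructor <;> linarith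
          have := sq_le_sq' (by linarith [abs_le.1 this]) (abs_le.1 this).2
          linarith
        calc ((W n ω - A n ω) / (n + 1 : ℝ)) ^ 2 / m ^ 2
            = (W n ω - A n ω) ^ 2 / m ^ 2 * ((n + 1 : ℝ) ^ 2)⁻¹ := by field_simp
          _ ≤ _ := by gcongr
      linarith [hb.1]
    have hIi : Integrable (fun ω => ((A n ω)⁻¹ * W n ω - 1) / (n + 1 : ℝ)) P :=
      (hprodi.sub (integrable_const _)).div_const _
    have hDi : Integrable (fun ω => Real.log (A (n + 1) ω) - Real.log (A n ω)) P :=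
      (hlog _ (by omega)).sub (hlog _ hn)
    have hU := integral_mono_ae hDi hIi (hpt.mono fun ω h => h.2)
    have hL := integral_mono_ae (hIi.sub (integrable_const _)) hDi (hpt.mono fun ω h => h.1)
    simp only [Pi.sub_apply] at hL
    rw [integral_sub hIi (integrable_const _)] at hL
    rw [integral_div, ← he] at hU hL
    simp only [integral_const, probReal_univ, one_smul] at hL
    push_cast
    have hk0 : (0 : ℝ) < n + 1 := by linarith
    have f1 : 0 ≤ e / (n + 1 : ℝ) := by positivity
    have f2 : e / (n + 1 : ℝ) ≤ 4 * μ ^ 2 / m ^ 2 * ((n + 1 : ℝ) ^ 2)⁻¹ := by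
      have f3 : μ ^ 2 / n / m ^ 2 ≤ 4 * μ ^ 2 / m ^ 2 * (n + 1 : ℝ)⁻¹ := by
        have f4 : (n : ℝ)⁻¹ ≤ 4 * (n + 1 : ℝ)⁻¹ := by
          rw [← div_eq_mul_inv, inv_eq_one_div, div_le_div_iff₀ hn0 hk0]
          linarith
        calc μ ^ 2 / n / m ^ 2 = μ ^ 2 / m ^ 2 * (n : ℝ)⁻¹ := by field_simp
          _ ≤ μ ^ 2 / m ^ 2 * (4 * (n + 1 : ℝ)⁻¹) := by gcongr
          _ = _ := by ring
      calc e / (n + 1 : ℝ) ≤ (4 * μ ^ 2 / m ^ 2 * (n + 1 : ℝ)⁻¹) / (n + 1 : ℝ) := by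
            gcongr
            exact heU.trans f3
        _ = _ := by field_simp
    rw [abs_le]
    constructor <;> linarith
  · refine ⟨μ ^ 2 / m ^ 2, by positivity, ?_⟩
    intro K hK
    have hK0 : (0 : ℝ) < K := by exact_mod_cast hK
    have e1 : (∫ ω, Real.log ((∑ i ∈ range K, W i ω) / K) ∂P)
        = ∫ ω, Real.log (A K ω) ∂P := by
      rw [hA]
    rw [e1]
    have hDi : Integrable (fun ω => Real.log (A K ω) - Real.log μ) P :=
      (hlog K hK).sub (integrable_const _)
    have hDE : ∫ ω, (Real.log (A K ω) - Real.log μ) ∂P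
        = (∫ ω, Real.log (A K ω) ∂P) - Real.log μ := by
      rw [integral_sub (hlog K hK) (integrable_const _)]
      simp
    have hSi := (hAS K hK).div_const (m ^ 2)
    have hU : ∫ ω, (Real.log (A K ω) - Real.log μ) ∂P ≤ ∫ ω, (A K ω - μ) / μ ∂P := by
      refine integral_mono_ae hDi (hlin K hK) ?_
      filter_upwards [hAb K hK] with ω h
      exact (log_increment_bounds hm0 hmμ h.1).2
    have hL : ∫ ω, ((A K ω - μ) / μ - (A K ω - μ) ^ 2 / m ^ 2) ∂P
        ≤ ∫ ω, (Real.log (A K ω) - Real.log μ) ∂P := by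
      refine integral_mono_ae ((hlin K hK).sub hSi) hDi ?_
      filter_upwards [hAb K hK] with ω h
      exact (log_increment_bounds hm0 hmμ h.1).1
    rw [integral_sub (hlin K hK) hSi, hlinE K hK, integral_div, hDE] at hL
    rw [hlinE K hK, hDE] at hU
    have h2 : (∫ ω, (A K ω - μ) ^ 2 ∂P) / m ^ 2 ≤ μ ^ 2 / K / m ^ 2 := by
      gcongr
      exact hAV K hK
    have h3 : μ ^ 2 / K / m ^ 2 = μ ^ 2 / m ^ 2 / K := by field_simp
    constructor <;> linarith
end

section
/- Let W_1, W_2, … be i.i.d. positive random variables such that W_1 and log W_1 are integrable, and let μ = E[W_1]. Write Ȳ_K = (1/K) Σ_{k=1}^{K} W_k. Then for every K ≥ 1, log Ȳ_K is integrable and E[log Ȳ_K] ≤ E[log Ȳ_{K+1}] ≤ log μ. That is, the expected level-K importance-sampling estimators form a nondecreasing sequence of lower bounds on log μ. -/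
open MeasureTheory ProbabilityTheory Finset

lemma lsm_log_concave {n : ℕ} (hn : 0 < n) (x : Fin n → ℝ) (hx : ∀ i, 0 < x i) :
    (∑ i, Real.log (x i)) / n ≤ Real.log ((∑ i, x i) / n) := by
  have hn' : (n : ℝ) ≠ 0 := by positivity
  have h := strictConcaveOn_log_Ioi.concaveOn.le_map_sum (t := Finset.univ)
    (w := fun _ : Fin n => (1 / n : ℝ)) (p := x) (fun i _ => by positivity)
    (by simp [hn']) (fun i _ => hx i)
  simp only [smul_eq_mul, ← Finset.mul_sum] at h
  rw [div_eq_inv_mul, div_eq_inv_mul, ← one_div]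
  exact h

lemma lsm_integrable {Ω : Type*} [MeasurableSpace Ω] (P : Measure Ω)
    {n : ℕ} (hn : 0 < n) (X : Fin n → Ω → ℝ) (hm : ∀ i, Measurable (X i))
    (hpos : ∀ i, ∀ᵐ ω ∂P, 0 < X i ω)
    (hint : ∀ i, Integrable (X i) P)
    (hlog : ∀ i, Integrable (fun ω => Real.log (X i ω)) P) :
    Integrable (fun ω => Real.log ((∑ i, X i ω) / n)) P := by
  have : NeZero n := ⟨hn.ne'⟩
  refine integrable_of_le_of_le (f := fun ω => Real.log ((∑ i, X i ω) / n))
    (g₁ := fun ω => (∑ i, Real.log (X i ω)) / n) (g₂ := fun ω => (∑ i, X i ω) / n) ?_ ?_ ?_ ?_ ?_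
  · exact (Real.measurable_log.comp
      ((Finset.measurable_fun_sum _ fun i _ => hm i).div_const _)).aestronglyMeasurable
  · filter_upwards [ae_all_iff.2 hpos] with ω h
    exact lsm_log_concave hn _ h
  · filter_upwards [ae_all_iff.2 hpos] with ω h
    exact Real.log_le_self (div_nonneg (Finset.sum_nonneg fun i _ => (h i).le) (by positivity))
  · exact (integrable_finsetSum _ fun i _ => hlog i).div_const _
  · exact (integrable_finsetSum _ fun i _ => hint i).div_const _

lemma lsm_ident {Ω : Type*} [MeasurableSpace Ω] (P : Measure Ω) [IsProbabilityMeasure P]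
    (W : ℕ → Ω → ℝ) (hmeas : ∀ i, Measurable (W i))
    (hindep : iIndepFun W P)
    (hident : ∀ i, IdentDistrib (W i) (W 0) P P) {K : ℕ} (e : Fin K → ℕ)
    (he : Function.Injective e) :
    ∫ ω, Real.log ((∑ i, W (e i) ω) / K) ∂P = ∫ ω, Real.log ((∑ i : Fin K, W i ω) / K) ∂P := by
  have key : ∀ e : Fin K → ℕ, Function.Injective e →
      P.map (fun ω i => W (e i) ω) = Measure.pi (fun _ : Fin K => P.map (W 0)) := by
    intro e he
    have h := (iIndepFun_iff_map_fun_eq_pi_map (fun i => (hmeas (e i)).aemeasurable)).1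
      (hindep.precomp he)
    refine h.trans ?_
    congr 1
    funext i
    exact (hident (e i)).map_eq
  have hg : Measurable (fun x : Fin K → ℝ => Real.log ((∑ i, x i) / K)) :=
    Real.measurable_log.comp
      ((Finset.measurable_fun_sum _ fun i _ => measurable_pi_apply i).div_const _)
  have key2 : ∀ e : Fin K → ℕ, Function.Injective e →
      ∫ ω, Real.log ((∑ i, W (e i) ω) / K) ∂P
        = ∫ x, Real.log ((∑ i, x i) / K) ∂(Measure.pi (fun _ : Fin K => P.map (W 0))) := by
    intro e he
    rw [← key e he, integral_map (measurable_pi_lambda _ fun i => hmeas (e i)).aemeasurable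
      hg.aestronglyMeasurable]
  rw [key2 e he, key2 _ Fin.val_injective]

/-- **Monotonicity of the importance-weighted lower bounds** (Burda–Grosse–Salakhutdinov).
Let `W 1, W 2, …` be i.i.d. positive random variables such that `W 1` and `log W 1` are
integrable, with mean `μ`, and let `Ȳ K` be the sample mean of the first `K` of them.
Then each `log Ȳ K` is integrable and the expected level-`K` importance-sampling
estimators `E[log Ȳ K]` form a nondecreasing sequence of lower bounds on `log μ`:
`E[log Ȳ K] ≤ E[log Ȳ (K+1)] ≤ log μ`. -/
theorem log_sample_mean_monotone
    {Ω : Type*} [MeasurableSpace Ω] (P : Measure Ω) [IsProbabilityMeasure P]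
    (W : ℕ → Ω → ℝ) (hmeas : ∀ i, Measurable (W i))
    (hindep : iIndepFun W P)
    (hident : ∀ i, IdentDistrib (W i) (W 0) P P)
    (hpos : ∀ i, ∀ᵐ ω ∂P, 0 < W i ω)
    (hint : Integrable (W 0) P)
    (hlogint : Integrable (fun ω => Real.log (W 0 ω)) P)
    (μ : ℝ) (hμ : μ = ∫ ω, W 0 ω ∂P) :
    ∀ K : ℕ, 1 ≤ K →
      Integrable (fun ω => Real.log ((∑ i ∈ range K, W i ω) / K)) P ∧
      (∫ ω, Real.log ((∑ i ∈ range K, W i ω) / K) ∂P)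
        ≤ ∫ ω, Real.log ((∑ i ∈ range (K + 1), W i ω) / (K + 1)) ∂P ∧
      (∫ ω, Real.log ((∑ i ∈ range (K + 1), W i ω) / (K + 1)) ∂P) ≤ Real.log μ := by
  have hint' : ∀ i, Integrable (W i) P := fun i => (hident i).integrable_iff.2 hint
  have hlog' : ∀ i, Integrable (fun ω => Real.log (W i ω)) P := fun i =>
    ((hident i).comp Real.measurable_log).integrable_iff.2 hlogint
  have hI : ∀ (n : ℕ) (_ : 0 < n) (e : Fin n → ℕ),
      Integrable (fun ω => Real.log ((∑ i, W (e i) ω) / n)) P := fun n hn e =>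
    lsm_integrable P hn (fun i => W (e i)) (fun i => hmeas _) (fun i => hpos _)
      (fun i => hint' _) (fun i => hlog' _)
  intro K hK
  have hK0 : (0 : ℝ) < K := by exact_mod_cast hK
  have hI1 := hI (K + 1) K.succ_pos (fun i => i)
  simp only [Finset.sum_range]
  push_cast at hI1
  refine ⟨hI K hK _, ?_, ?_⟩
  · have hJ : ∀ j : Fin (K + 1),
        ∫ ω, Real.log ((∑ i : Fin K, W (j.succAbove i) ω) / K) ∂P
          = ∫ ω, Real.log ((∑ i : Fin K, W i ω) / K) ∂P := fun j =>
      lsm_ident P W hmeas hindep hident (fun i => (j.succAbove i : ℕ))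
        (Fin.val_injective.comp Fin.succAbove_right_injective)
    have hIj : ∀ j : Fin (K + 1), Integrable
        (fun ω => Real.log ((∑ i : Fin K, W (j.succAbove i) ω) / K)) P := fun j =>
      hI K hK (fun i => (j.succAbove i : ℕ))
    calc ∫ ω, Real.log ((∑ i : Fin K, W i ω) / K) ∂P
        = ∫ ω, (∑ j : Fin (K + 1), Real.log ((∑ i : Fin K, W (j.succAbove i) ω) / K))
            / ((K + 1 : ℕ) : ℝ) ∂P := by
          rw [integral_div, integral_finsetSum _ fun j _ => hIj j]
          simp only [hJ, Finset.sum_const, Finset.card_univ, Fintype.card_fin, nsmul_eq_mul]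
          field_simp
      _ ≤ _ := by
          refine integral_mono_ae ((integrable_finsetSum _ fun j _ => hIj j).div_const _) hI1 ?_
          filter_upwards [ae_all_iff.2 hpos] with ω h
          have : NeZero K := ⟨by omega⟩
          refine (lsm_log_concave K.succ_pos _ fun j =>
            div_pos (Finset.sum_pos (fun i _ => h _) Finset.univ_nonempty) hK0).trans_eq ?_
          have hs : ∀ j : Fin (K + 1), (∑ i : Fin K, W (j.succAbove i) ω)
              = (∑ i : Fin (K + 1), W i ω) - W j ω := fun j => by
            rw [Fin.sum_univ_succAbove (fun i : Fin (K + 1) => W i ω) j]; ring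
          simp only [hs, ← Finset.sum_div, Finset.sum_sub_distrib, Finset.sum_const,
            Finset.card_univ, Fintype.card_fin, nsmul_eq_mul]
          congr 1
          push_cast
          field_simp
          ring
  · have hμpos : 0 < μ := by
      rw [hμ, integral_pos_iff_support_of_nonneg_ae ((hpos 0).mono fun _ h => h.le) hint]
      have : P (Function.support (W 0)) = 1 :=
        (prob_compl_eq_zero_iff (measurableSet_support (hmeas 0))).1
          (measure_mono_null (fun ω hω => by
            simp only [Set.mem_compl_iff, Function.mem_support, not_not] at hω
            simp [hω]) (hpos 0))
      rw [this]; exact one_pos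
    have hSint : Integrable (fun ω => (∑ i : Fin (K + 1), W i ω) / ((K : ℝ) + 1) / μ) P :=
      ((integrable_finsetSum _ fun i _ => hint' _).div_const _).div_const _
    calc _ ≤ ∫ ω, ((∑ i : Fin (K + 1), W i ω) / ((K : ℝ) + 1) / μ + (Real.log μ - 1)) ∂P := by
          refine integral_mono_ae hI1 (hSint.add (integrable_const _)) ?_
          filter_upwards [ae_all_iff.2 hpos] with ω h
          have hp : 0 < (∑ i : Fin (K + 1), W i ω) / ((K : ℝ) + 1) :=
            div_pos (Finset.sum_pos (fun i _ => h _) Finset.univ_nonempty) (by positivity)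
          have h2 := Real.log_le_sub_one_of_pos (div_pos hp hμpos)
          rw [Real.log_div hp.ne' hμpos.ne'] at h2
          linarith
      _ = Real.log μ := by
          rw [integral_add hSint (integrable_const _), integral_div, integral_div,
            integral_finsetSum _ fun i _ => hint' _]
          have : ∀ i : Fin (K + 1), ∫ ω, W i ω ∂P = μ := fun i =>
            (hident i).integral_eq.trans hμ.symm
          simp only [this, Finset.sum_const, Finset.card_univ, Fintype.card_fin, nsmul_eq_mul,
            integral_const, probReal_univ, smul_eq_mul]
          push_cast
          field_simp
          ring
end

section
/- Let L ∈ ℝ and for each K ∈ ℕ₊ let L̂_{1,K} be a square-integrable real random variable with Var[L̂_{1,K}] ≤ V for a constant V > 0 and |E[L̂_{1,K}] − L| ≤ c1·K^{−α} for constants c1, α > 0. For M, K ∈ ℕ₊ let L̂_{M,K} be the average of M independent copies of L̂_{1,K}, so that its mean squared error for L equals Var[L̂_{1,K}]/M + (E[L̂_{1,K}] − L)². Then there exists a constant c3 > 0, depending only on V, c1 and α, such that for every ε ∈ (0, 1], choosing M = ⌈2V·ε^{−2}⌉ and K = ⌈(√2·c1/ε)^{1/α}⌉ yields E[(L̂_{M,K}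 − L)²] ≤ ε², with total computational cost M·K ≤ c3·ε^{−2−1/α}. -/
open MeasureTheory ProbabilityTheory

/-- **Complexity of the nested Monte Carlo estimator.**
Let `Y K` (for `K ≥ 1`) be the single-data-point nested Monte Carlo estimator of the model
evidence `L` using `K` inner samples: a square-integrable random variable with
`Var[Y K] ≤ V` and bias `|E[Y K] − L| ≤ c1·K^{−α}`.  Averaging `M` independent copies
gives mean squared error `Var[Y K]/M + (E[Y K] − L)²` at cost `M·K`.  Then there is a
constant `c3 > 0` depending only on `V, c1, α` such that for every `ε ∈ (0,1]`, the choices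
`M = ⌈2V·ε⁻²⌉` and `K = ⌈(√2·c1/ε)^{1/α}⌉` drive the mean squared error below `ε²` at
total cost `M·K ≤ c3·ε^{−2−1/α}`. -/
theorem nested_monte_carlo_complexity
    (V c1 α : ℝ) (hV : 0 < V) (hc1 : 0 < c1) (hα : 0 < α) :
    ∃ c3 > (0 : ℝ),
      ∀ {Ω : Type} [MeasurableSpace Ω] (P : Measure Ω), IsProbabilityMeasure P →
      ∀ (L : ℝ) (Y : ℕ → Ω → ℝ), (∀ K, 1 ≤ K → MemLp (Y K) 2 P) →
      (∀ K : ℕ, 1 ≤ K → variance (Y K) P ≤ V) →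
      (∀ K : ℕ, 1 ≤ K → |(∫ ω, Y K ω ∂P) - L| ≤ c1 * (K : ℝ) ^ (-α)) →
      ∀ ε : ℝ, 0 < ε → ε ≤ 1 →
        ∀ M K : ℕ, M = ⌈2 * V * ε⁻¹ ^ 2⌉₊ → K = ⌈(Real.sqrt 2 * c1 / ε) ^ (1 / α)⌉₊ →
          variance (Y K) P / (M : ℝ) + ((∫ ω, Y K ω ∂P) - L) ^ 2 ≤ ε ^ 2 ∧
          (M : ℝ) * (K : ℝ) ≤ c3 * ε ^ (-2 - 1 / α) := by
  have hs : 0 < Real.sqrt 2 := by positivity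
  have hA : 0 < (Real.sqrt 2 * c1) ^ (1 / α) := Real.rpow_pos_of_pos (by positivity) _
  refine ⟨(2 * V + 1) * ((Real.sqrt 2 * c1) ^ (1 / α) + 1), by positivity, ?_⟩
  intro Ω _ P _ L Y _ hvar hbias ε hε hε1 M K hM hK
  have hx : 0 < (Real.sqrt 2 * c1 / ε) ^ (1 / α) := Real.rpow_pos_of_pos (by positivity) _
  have hm : 0 < 2 * V * ε⁻¹ ^ 2 := by positivity
  have hK1 : 1 ≤ K := by rw [hK]; exact Nat.one_le_iff_ne_zero.mpr (Nat.ceil_pos.mpr hx).ne'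
  have hKge : (Real.sqrt 2 * c1 / ε) ^ (1 / α) ≤ (K : ℝ) := by rw [hK]; exact Nat.le_ceil _
  have hMge : 2 * V * ε⁻¹ ^ 2 ≤ (M : ℝ) := by rw [hM]; exact Nat.le_ceil _
  have hKle : (K : ℝ) ≤ (Real.sqrt 2 * c1 / ε) ^ (1 / α) + 1 := by
    rw [hK]; exact (Nat.ceil_lt_add_one hx.le).le
  have hMle : (M : ℝ) ≤ 2 * V * ε⁻¹ ^ 2 + 1 := by
    rw [hM]; exact (Nat.ceil_lt_add_one hm.le).le
  have hMpos : (0 : ℝ) < M := lt_of_lt_of_le hm hMge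
  have hKpos : (0 : ℝ) < K := lt_of_lt_of_le hx hKge
  constructor
  · have h1 : variance (Y K) P / (M : ℝ) ≤ ε ^ 2 / 2 := by
      rw [div_le_iff₀ hMpos]
      have h2 : ε ^ 2 / 2 * (2 * V * ε⁻¹ ^ 2) = V := by field_simp
      have h3 : ε ^ 2 / 2 * (2 * V * ε⁻¹ ^ 2) ≤ ε ^ 2 / 2 * M := by gcongr
      linarith [hvar K hK1]
    have hKα : Real.sqrt 2 * c1 / ε ≤ (K : ℝ) ^ α := by
      have h := Real.rpow_le_rpow hx.le hKge hα.le
      rwa [← Real.rpow_mul (by positivity), one_div_mul_cancel hα.ne', Real.rpow_one] at h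
    have hKαpos : 0 < (K : ℝ) ^ α := Real.rpow_pos_of_pos hKpos _
    have hb : c1 * (K : ℝ) ^ (-α) ≤ ε / Real.sqrt 2 := by
      rw [Real.rpow_neg hKpos.le, ← div_eq_mul_inv, div_le_div_iff₀ hKαpos hs]
      rw [div_le_iff₀ hε] at hKα
      linarith
    have h4 : ((∫ ω, Y K ω ∂P) - L) ^ 2 ≤ (ε / Real.sqrt 2) ^ 2 := by
      rw [← sq_abs]
      exact pow_le_pow_left₀ (abs_nonneg _) ((hbias K hK1).trans hb) 2
    rw [div_pow, Real.sq_sqrt (by norm_num)] at h4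
    linarith
  · have e1 : ε ^ (-2 - 1 / α) = ε⁻¹ ^ 2 * ε⁻¹ ^ (1 / α) := by
      rw [sub_eq_add_neg, Real.rpow_add hε, Real.rpow_neg hε.le, Real.rpow_neg hε.le,
        Real.inv_rpow hε.le, inv_pow]
      norm_num
    have hi : 1 ≤ ε⁻¹ := (one_le_inv₀ hε).mpr hε1
    have hi2 : 1 ≤ ε⁻¹ ^ 2 := one_le_pow₀ hi
    have hi3 : 1 ≤ ε⁻¹ ^ (1 / α) := Real.one_le_rpow hi (by positivity)
    rw [div_eq_mul_inv (Real.sqrt 2 * c1) ε,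
      Real.mul_rpow (by positivity) (by positivity)] at hKle
    have hM2 : (M : ℝ) ≤ (2 * V + 1) * ε⁻¹ ^ 2 := by linarith
    have hK2 : (K : ℝ) ≤ ((Real.sqrt 2 * c1) ^ (1 / α) + 1) * ε⁻¹ ^ (1 / α) := by linarith
    rw [e1]
    calc (M : ℝ) * K ≤ ((2 * V + 1) * ε⁻¹ ^ 2) *
          (((Real.sqrt 2 * c1) ^ (1 / α) + 1) * ε⁻¹ ^ (1 / α)) :=
          mul_le_mul hM2 hK2 hKpos.le (by positivity)
      _ = _ := by ring
end

section
/- Let (Δ_ℓ)_{ℓ≥0} be square-integrable real random variables with E[Δ_ℓ²] ≤ c2·2^{−βℓ} for constants c2 > 0 and β > 1, and suppose the series Σ_{ℓ=0}^{∞} E[Δ_ℓ] converges absolutely to a value 𝓛. Set ρ = 2^{−(β+1)/2} and ω_ℓ = (1 − ρ)·ρ^ℓ, so that ω_ℓ > 0 and Σ_ℓ ω_ℓ = 1. Let ℓ* be an ℕ-valued random variable with P(ℓ* = ℓ) = ω_ℓ, independent of the family (Δ_ℓ), and define the randomized MLMC estimator Z = Δ_{ℓ*}/ω_{ℓ*}.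 Then: (i) Z is integrable with E[Z] = 𝓛 (the estimator is unbiased); (ii) E[Z²] = Σ_{ℓ=0}^{∞} E[Δ_ℓ²]/ω_ℓ < ∞, so Z has finite variance; (iii) the expected computational cost E[2^{ℓ*}] = Σ_{ℓ=0}^{∞} ω_ℓ·2^ℓ is finite. -/
open MeasureTheory ProbabilityTheory

lemma mlmc_aux {Ω : Type*} [MeasurableSpace Ω] (P : Measure Ω) [IsProbabilityMeasure P]
    (g : ℕ → Ω → ℝ) (hg : ∀ k, Integrable (g k) P) (w : ℕ → ℝ) (hw : ∀ k, 0 ≤ w k)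
    (N : Ω → ℕ) (hN : Measurable N)
    (hlaw : ∀ k : ℕ, P {ω | N ω = k} = ENNReal.ofReal (w k))
    (hind : ∀ k, IndepFun N (g k) P)
    (hs : Summable fun k => w k * ∫ ω, |g k ω| ∂P) :
    Integrable (fun ω => g (N ω) ω) P ∧
      ∫ ω, g (N ω) ω ∂P = ∑' k, w k * ∫ ω, g k ω ∂P := by
  have hS : ∀ k, MeasurableSet (N ⁻¹' {k}) := fun k => hN (measurableSet_singleton k)
  have hU : (⋃ k, N ⁻¹' {k}) = Set.univ := by ext; simp
  have key : ∀ k (φ : ℝ → ℝ), Measurable φ → Integrable (fun ω => φ (g k ω)) P →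
      ∫ ω in N ⁻¹' {k}, φ (g (N ω) ω) ∂P = w k * ∫ ω, φ (g k ω) ∂P := by
    intro k φ hφ hi
    have h1 : ∫ ω in N ⁻¹' {k}, φ (g (N ω) ω) ∂P = ∫ ω in N ⁻¹' {k}, φ (g k ω) ∂P := by
      apply setIntegral_congr_fun (hS k)
      intro ω hω
      have : N ω = k := hω
      simp [this]
    rw [h1, ← integral_indicator (hS k)]
    have hmi : Measurable (fun n : ℕ => if n = k then (1 : ℝ) else 0) := measurable_of_countable _
    have h2 : IndepFun (fun ω => if N ω = k then (1 : ℝ) else 0) (fun ω => φ (g k ω)) P :=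
      (hind k).comp hmi hφ
    have h3 := h2.integral_fun_mul_eq_mul_integral
      (hmi.comp hN).aestronglyMeasurable hi.aestronglyMeasurable
    have h4 : ∫ ω, (if N ω = k then (1 : ℝ) else 0) ∂P = w k := by
      have : (fun ω => if N ω = k then (1 : ℝ) else 0) = (N ⁻¹' {k}).indicator 1 := by
        ext ω; by_cases h : N ω = k <;> simp [h]
      rw [this, integral_indicator_one (hS k), measureReal_def]
      have h5 := hlaw k
      change P (N ⁻¹' {k}) = _ at h5
      rw [h5, ENNReal.toReal_ofReal (hw k)]
    rw [h4] at h3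
    rw [← h3]
    congr 1
    ext ω
    by_cases h : N ω = k <;> simp [h]
  have hon : ∀ k, IntegrableOn (fun ω => g (N ω) ω) (N ⁻¹' {k}) P := by
    intro k
    refine ((hg k).integrableOn).congr_fun ?_ (hS k)
    intro ω hω
    have : N ω = k := hω
    simp [this]
  have hI : IntegrableOn (fun ω => g (N ω) ω) (⋃ k, N ⁻¹' {k}) P := by
    refine integrableOn_iUnion_of_summable_integral_norm hon ?_
    refine hs.congr fun k => ?_
    exact (key k (fun x => |x|) measurable_id.abs (hg k).abs).symm
  refine ⟨by rwa [hU, integrableOn_univ] at hI, ?_⟩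
  have hsum := hasSum_integral_iUnion hS
    (fun i j hij => Disjoint.preimage N (by simpa using hij)) hI
  rw [hU, Measure.restrict_univ] at hsum
  rw [← hsum.tsum_eq]
  exact tsum_congr fun k => key k id measurable_id (hg k)

/-- **Unbiasedness, finite variance and finite expected cost of the randomized MLMC
estimator** (Rhee–Glynn randomization).  Let `Δ ℓ` be square-integrable MLMC corrections
with `E[Δ ℓ²] ≤ c2·2^{−βℓ}` for some `β > 1`, whose expectations sum absolutely to the
model evidence `𝓛`.  With `ρ = 2^{−(β+1)/2}` and weights `w ℓ = (1−ρ)·ρ^ℓ`, draw a random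
level `ℓ*` with `P(ℓ* = ℓ) = w ℓ`, independent of the corrections, and set
`Z = Δ_{ℓ*}/w_{ℓ*}`. Then `Z` is integrable with `E[Z] = 𝓛`; its second moment equals
`∑_ℓ E[Δ ℓ²]/w ℓ`, a convergent series; and the expected cost `E[2^{ℓ*}] = ∑_ℓ w ℓ·2^ℓ`
is finite. -/
theorem randomized_mlmc_unbiased
    {Ω : Type*} [MeasurableSpace Ω] (P : Measure Ω) [IsProbabilityMeasure P]
    (Δ : ℕ → Ω → ℝ) (hΔ : ∀ ℓ, MemLp (Δ ℓ) 2 P)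
    (c2 β : ℝ) (hc2 : 0 < c2) (hβ : 1 < β)
    (hsq : ∀ ℓ : ℕ, ∫ ω, (Δ ℓ ω) ^ 2 ∂P ≤ c2 * (2 : ℝ) ^ (-β * ℓ))
    (hsummable : Summable fun ℓ : ℕ => |∫ ω, Δ ℓ ω ∂P|)
    (𝓛 : ℝ) (h𝓛 : 𝓛 = ∑' ℓ : ℕ, ∫ ω, Δ ℓ ω ∂P)
    (ρ : ℝ) (hρ : ρ = (2 : ℝ) ^ (-(β + 1) / 2))
    (w : ℕ → ℝ) (hw : ∀ ℓ, w ℓ = (1 - ρ) * ρ ^ ℓ)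
    (ℓstar : Ω → ℕ) (hℓmeas : Measurable ℓstar)
    (hℓlaw : ∀ ℓ : ℕ, P {ω | ℓstar ω = ℓ} = ENNReal.ofReal (w ℓ))
    (hindep : IndepFun ℓstar (fun ω (k : ℕ) => Δ k ω) P)
    (Z : Ω → ℝ) (hZ : ∀ ω, Z ω = Δ (ℓstar ω) ω / w (ℓstar ω)) :
    (Integrable Z P ∧ ∫ ω, Z ω ∂P = 𝓛) ∧
    (Summable (fun ℓ : ℕ => (∫ ω, (Δ ℓ ω) ^ 2 ∂P) / w ℓ) ∧
      ∫ ω, (Z ω) ^ 2 ∂P = ∑' ℓ : ℕ, (∫ ω, (Δ ℓ ω) ^ 2 ∂P) / w ℓ) ∧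
    (Integrable (fun ω => (2 : ℝ) ^ (ℓstar ω)) P ∧
      ∫ ω, (2 : ℝ) ^ (ℓstar ω) ∂P = ∑' ℓ : ℕ, w ℓ * 2 ^ ℓ) := by
  have hρ0 : 0 < ρ := by rw [hρ]; positivity
  have hρ1 : ρ < 1 := by
    rw [hρ]; exact Real.rpow_lt_one_of_one_lt_of_neg (by norm_num) (by linarith)
  set r : ℝ := (2 : ℝ) ^ ((1 - β) / 2) with hr
  have hr0 : 0 < r := by positivity
  have hr1 : r < 1 := Real.rpow_lt_one_of_one_lt_of_neg (by norm_num) (by linarith)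
  have h2ρ : ρ * 2 = r := by
    rw [hρ, hr, ← Real.rpow_add_one (by norm_num)]
    congr 1; ring
  have hβr : (2 : ℝ) ^ (-β) = ρ * r := by
    rw [hρ, hr, ← Real.rpow_add (by norm_num)]
    congr 1; ring
  have hw0 : ∀ k, 0 < w k := fun k => by
    rw [hw]; exact mul_pos (by linarith) (pow_pos hρ0 k)
  have hgeo : Summable fun k : ℕ => r ^ k := summable_geometric_of_lt_one hr0.le hr1
  have hws : Summable w := by
    have : w = fun k => (1 - ρ) * ρ ^ k := funext hw
    rw [this]
    exact (summable_geometric_of_lt_one hρ0.le hρ1).mul_left _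
  have hS2 : Summable (fun ℓ : ℕ => (∫ ω, (Δ ℓ ω) ^ 2 ∂P) / w ℓ) := by
    refine Summable.of_nonneg_of_le
      (fun k => div_nonneg (integral_nonneg fun ω => sq_nonneg _) (hw0 k).le) (fun k => ?_)
      (hgeo.mul_left (c2 / (1 - ρ)))
    rw [div_le_iff₀ (hw0 k)]
    refine (hsq k).trans (le_of_eq ?_)
    rw [Real.rpow_mul (by norm_num), Real.rpow_natCast, hβr, hw, mul_pow]
    have : 1 - ρ ≠ 0 := by linarith
    field_simp
  have hi1 : ∀ k, Integrable (Δ k) P := fun k => (hΔ k).integrable (by norm_num)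
  have hi2 : ∀ k, Integrable (fun ω => (Δ k ω) ^ 2) P := fun k => (hΔ k).integrable_sq
  have hind : ∀ k, IndepFun ℓstar (Δ k) P := fun k =>
    hindep.comp measurable_id (measurable_pi_apply k)
  have hS1 : Summable (fun k : ℕ => ∫ ω, |Δ k ω| ∂P) := by
    refine Summable.of_nonneg_of_le (fun k => integral_nonneg fun ω => abs_nonneg _)
      (fun k => ?_) (hS2.add hws)
    have h : ∫ ω, |Δ k ω| ∂P ≤ ∫ ω, ((Δ k ω) ^ 2 / w k + w k) ∂P := by
      refine integral_mono (hi1 k).abs (((hi2 k).div_const _).add (integrable_const _)) fun ω => ?_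
      have hk := hw0 k
      change |Δ k ω| ≤ (Δ k ω) ^ 2 / w k + w k
      rw [← sq_abs, div_add' _ _ _ hk.ne', le_div_iff₀ hk]
      nlinarith [sq_nonneg (|Δ k ω| - w k), abs_nonneg (Δ k ω), sq_nonneg (|Δ k ω|), sq_nonneg (w k)]
    rw [integral_add ((hi2 k).div_const _) (integrable_const _), integral_div] at h
    simpa using h
  refine ⟨?_, ⟨hS2, ?_⟩, ?_⟩
  · have h := mlmc_aux P (fun k ω => Δ k ω / w k) (fun k => (hi1 k).div_const _) w
      (fun k => (hw0 k).le) ℓstar hℓmeas hℓlaw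
      (fun k => (hind k).comp measurable_id (measurable_id.div_const (w k)))
      (hS1.congr fun k => by
        simp only [abs_div, abs_of_pos (hw0 k)]
        rw [integral_div, mul_div_cancel₀ _ (hw0 k).ne'])
    have hZ' : Z = fun ω => Δ (ℓstar ω) ω / w (ℓstar ω) := funext hZ
    rw [hZ', h𝓛]
    refine ⟨h.1, h.2.trans (tsum_congr fun k => ?_)⟩
    rw [integral_div, mul_div_cancel₀ _ (hw0 k).ne']
  · have e : ∀ k, w k * ∫ ω, (Δ k ω / w k) ^ 2 ∂P = (∫ ω, (Δ k ω) ^ 2 ∂P) / w k := by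
      intro k
      have := (hw0 k).ne'
      simp only [div_pow]
      rw [integral_div]
      field_simp
    have h := mlmc_aux P (fun k ω => (Δ k ω / w k) ^ 2)
      (fun k => by simpa only [div_pow] using (hi2 k).div_const (w k ^ 2)) w
      (fun k => (hw0 k).le) ℓstar hℓmeas hℓlaw
      (fun k => (hind k).comp measurable_id ((measurable_id.div_const (w k)).pow_const 2))
      (hS2.congr fun k => by
        simp only [abs_sq]
        exact (e k).symm)
    simp only [hZ]
    exact h.2.trans (tsum_congr e)
  · have h := mlmc_aux P (fun k _ => (2 : ℝ) ^ k) (fun k => integrable_const _) w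
      (fun k => (hw0 k).le) ℓstar hℓmeas hℓlaw
      (fun k => indepFun_const_right _ _)
      ((hgeo.mul_left (1 - ρ)).congr fun k => by
        simp [hw, ← h2ρ, mul_pow, mul_assoc])
    refine ⟨h.1, h.2.trans (tsum_congr fun k => by simp)⟩
end
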